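/- Let n ≥ 2 and let 𝒜 be a malnormal subgroup system of F_n. Then the space ∂²(F_n,𝒜) is locally compact. -/

import Mathlib

/-!
The space of unordered pairs of boundary points is locally compact, being the image of
`∂F_n × ∂F_n` under an open quotient map, so it suffices that `∂²(F_n,𝒜)` is open in it.

Limit sets are closed. Hence it is enough to see that, off the diagonal, the squares `∂B × ∂B` with
`[B] ∈ 𝒜` form a locally finite family. Suppose that `ξ, η ∈ ∂(gAg⁻¹)` differ at position `k`, and
let `u` be the prefix of `ξ` of length `k + 1`. The coset `gA` accumulates at both `ξ` and `η`, so
it has vertices inside and outside the subtree of the Cayley tree formed by the words with prefix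
`u`. Any two vertices of `gA` are joined by a path in `gA` whose jumps are generators of `A`, and
such a path can leave the subtree only from a vertex near its root: `gA` contains some `h` with
`|h| ≤ k + 1 + R`, where `R` is the maximal length of a generator. As `gAg⁻¹ = hAh⁻¹`, only finitely
many conjugates of `A` occur for a given `k`.
-/

open scoped Classical
open MeasureTheory

noncomputable section

namespace RelCurr

/-- The alphabet `𝔄 = ℬ ∪ ℬ⁻¹`: a letter is a generator together with a sign. -/
abbrev Letter (n : ℕ) := Fin n × Bool

/-- The inverse of a letter. -/
def linv {n : ℕ} (x : Letter n) : Letter n := (x.1, !x.2)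

/-- The free group of rank `n` on the basis `Fin n`. -/
abbrev F (n : ℕ) := FreeGroup (Fin n)

/-- The reduced word of an element of `F n`. -/
def rword {n : ℕ} (g : F n) : List (Letter n) := FreeGroup.toWord g

/-- The length `|g|` of the reduced word of `g`. -/
def wlen {n : ℕ} (g : F n) : ℕ := (rword g).length

/-- The single-letter element of `F n` given by a letter. -/
def letterE {n : ℕ} (b : Letter n) : F n := FreeGroup.mk [b]

/-- The conjugate subgroup `g A g⁻¹`. -/
def conjSub {n : ℕ} (g : F n) (A : Subgroup (F n)) : Subgroup (F n) :=
  Subgroup.map (MulAut.conj g).toMonoidHom A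

/-- A subgroup `A` is malnormal if `xAx⁻¹ ∩ A = {1}` for every `x ∉ A`. -/
def Malnormal {n : ℕ} (A : Subgroup (F n)) : Prop :=
  ∀ x : F n, x ∉ A → conjSub x A ⊓ A = ⊥

/-- The word metric on the Cayley tree `T`. -/
def dist' {n : ℕ} (x y : F n) : ℕ := wlen (x⁻¹ * y)

/-- The cyclically reduced length of `a`. -/
def cycLen {n : ℕ} (a : F n) : ℕ := sInf { m | ∃ h : F n, wlen (h⁻¹ * a * h) = m }

/-- The vertex set of the minimal `A`-invariant subtree `T_A` of the Cayley tree: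
the union of the axes of the nontrivial elements of `A`. -/
def treeVerts {n : ℕ} (A : Subgroup (F n)) : Set (F n) :=
  { h | ∃ a ∈ A, a ≠ 1 ∧ wlen (h⁻¹ * a * h) = cycLen a }

/-- `γ_w ⊆ S`: every prefix of the reduced word of `w` lies in the vertex set `S`. -/
def pathIn {n : ℕ} (w : F n) (S : Set (F n)) : Prop :=
  ∀ m ≤ wlen w, FreeGroup.mk ((rword w).take m) ∈ S

/-- An element is cyclically reduced if the last letter of its reduced word is not the
inverse of the first letter. -/
def CyclicallyReduced {n : ℕ} (w : F n) : Prop :=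
  ∀ x y : Letter n, (rword w).head? = some x → (rword w).getLast? = some y → y ≠ linv x

/-- `v` is a length-one extension of `w`. -/
def LengthOneExt {n : ℕ} (w v : F n) : Prop :=
  ∃ b : Letter n, v = w * letterE b ∧ wlen v = wlen w + 1

/-- `a` is an extension of `w`: the reduced word of `w` is a proper prefix of that of `a`. -/
def ExtensionOf {n : ℕ} (w a : F n) : Prop :=
  rword w <+: rword a ∧ wlen w < wlen a

/-- `g` is a proper power. -/
def IsProperPower {n : ℕ} (g : F n) : Prop := ∃ (h : F n) (k : ℕ), 2 ≤ k ∧ g = h ^ k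

section System

variable {n r : ℕ} (A : Fin r → Subgroup (F n))

/-- `[B] ∈ 𝒜`, i.e. `B` is a conjugate of one of the subgroups of the system. -/
def InSystem (B : Subgroup (F n)) : Prop := ∃ (i : Fin r) (g : F n), B = conjSub g (A i)

/-- The family `A` represents a subgroup system: finite rank subgroups distinct
from `{1}` and `F n`. -/
def IsSystem : Prop := (∀ i, (A i).FG) ∧ (∀ i, A i ≠ ⊥) ∧ (∀ i, A i ≠ ⊤)

/-- The subgroup system is malnormal. -/
def SystemMalnormal : Prop :=
  (∀ i, Malnormal (A i)) ∧
  ∀ B₁ B₂ : Subgroup (F n), InSystem A B₁ → InSystem A B₂ → B₁ ≠ B₂ → B₁ ⊓ B₂ = ⊥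

/-- `g` is `𝒜`-peripheral: trivial or contained in a conjugate of one of the `A i`. -/
def Peripheral (g : F n) : Prop := g = 1 ∨ ∃ B, InSystem A B ∧ g ∈ B

/-- The diameter of the intersection of the trees of two distinct subgroups of the
system is at most `L`. -/
def DiamBound (L : ℕ) : Prop :=
  ∀ B₁ B₂ : Subgroup (F n), InSystem A B₁ → InSystem A B₂ → B₁ ≠ B₂ →
    ∀ x ∈ treeVerts B₁ ∩ treeVerts B₂, ∀ y ∈ treeVerts B₁ ∩ treeVerts B₂, dist' x y ≤ L

/-- `B ∈ Γ_i`: `B` is a conjugate of `A i` whose tree contains the base point `1`. -/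
def GammaMem (i : Fin r) (B : Subgroup (F n)) : Prop :=
  (∃ g : F n, B = conjSub g (A i)) ∧ (1 : F n) ∈ treeVerts B

/-- The finite set `𝒞` of words of length `L+2` whose path is contained in no tree
`T_B` with `B ∈ Γ_i`, for every `i`. -/
def Ccal (L : ℕ) : Set (F n) :=
  { w | wlen w = L + 2 ∧ ∀ (i : Fin r) (B : Subgroup (F n)), GammaMem A i B →
      ¬ pathIn w (treeVerts B) }

/-- `F_n − 𝒜`: the words containing an element of `𝒞` as a contiguous subword. -/
def FmA (L : ℕ) : Set (F n) := { w | ∃ x ∈ Ccal A L, rword x <:+: rword w }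

/-- `S_k`: words of length `k` not containing any element of `𝒞` as a subword. -/
def Sk (L k : ℕ) : Set (F n) := { w | wlen w = k ∧ w ∉ FmA A L }

end System

/-! ### The boundary of `F n` -/

/-- An infinite reduced word. -/
def IsRed {n : ℕ} (ξ : ℕ → Letter n) : Prop := ∀ i, ξ (i + 1) ≠ linv (ξ i)

/-- The Gromov boundary `∂F_n`, realized as the space of infinite reduced words,
topologized as a subspace of the product space. -/
def Boundary (n : ℕ) : Type := { ξ : ℕ → Letter n // IsRed ξ }

instance {n : ℕ} : TopologicalSpace (Boundary n) :=
  instTopologicalSpaceSubtype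

/-- The length-`m` prefix of a boundary point. -/
def bpre {n : ℕ} (ξ : Boundary n) (m : ℕ) : List (Letter n) :=
  (List.range m).map ξ.1

/-- The reduced word of `w` is a prefix of the infinite word `ξ`. -/
def wordPrefixOf {n : ℕ} (w : F n) (ξ : Boundary n) : Prop :=
  bpre ξ (wlen w) = rword w

/-- The boundary (limit set) `∂A ⊆ ∂F_n` of a subgroup `A`. -/
def limitSet {n : ℕ} (A : Subgroup (F n)) : Set (Boundary n) :=
  { ξ | ∀ m : ℕ, ∃ a ∈ A, bpre ξ m <+: rword a }

/-- `ξ = g^{+∞}`: `ξ` is the limit of the reduced words of the powers of `g`. -/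
def IsPosLimit {n : ℕ} (g : F n) (ξ : Boundary n) : Prop :=
  ∀ m : ℕ, ∃ N : ℕ, ∀ k ≥ N, bpre ξ m <+: rword (g ^ k)

/-- The number of letters cancelled when concatenating the word `l` with the
infinite reduced word `ξ`. -/
def cancelLen {n : ℕ} (l : List (Letter n)) (ξ : ℕ → Letter n) : ℕ :=
  sSup { j | j ≤ l.length ∧ ∀ i < j, l.reverse[i]? = some (linv (ξ i)) }

/-- The sequence underlying the action of `g` on a boundary point: left multiplication
followed by cancellation. -/
def actSeq {n : ℕ} (g : F n) (ξ : ℕ → Letter n) : ℕ → Letter n :=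
  fun m =>
    if h : m < (rword g).length - cancelLen (rword g) ξ then
      (rword g).get ⟨m, by omega⟩
    else ξ (m - ((rword g).length - cancelLen (rword g) ξ) + cancelLen (rword g) ξ)

/-- The action of `F n` on its boundary: left multiplication followed by cancellation.
(The sequence `actSeq g ξ.1` is always reduced, so the first branch always applies.) -/
def bAct {n : ℕ} (g : F n) (ξ : Boundary n) : Boundary n :=
  if h : IsRed (actSeq g ξ.1) then ⟨actSeq g ξ.1, h⟩ else ξ

/-! ### The double boundary -/

/-- The diagonal action of `F n` on `Sym2 (∂F_n)`, whose restriction to the set of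
non-diagonal classes is the action on the double boundary `∂²F_n`. -/
def dbAct {n : ℕ} (g : F n) : Sym2 (Boundary n) → Sym2 (Boundary n) := Sym2.map (bAct g)

/-- `∂²𝒜`: the classes `{ξ,η}` with both endpoints in `g·∂A_i = ∂(gA_ig⁻¹)` for some
`i` and `g`. -/
def dblBndA {n r : ℕ} (A : Fin r → Subgroup (F n)) : Set (Sym2 (Boundary n)) :=
  { z | ∃ (i : Fin r) (g : F n) (ξ η : Boundary n), z = s(ξ, η) ∧
      ξ ∈ limitSet (conjSub g (A i)) ∧ η ∈ limitSet (conjSub g (A i)) }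

/-- The double boundary `∂²(F_n,𝒜)` of `F n` relative to `𝒜`, as a subset of
`Sym2 (∂F_n)`: non-diagonal classes not lying in `∂²𝒜`. -/
def relSet {n r : ℕ} (A : Fin r → Subgroup (F n)) : Set (Sym2 (Boundary n)) :=
  { z | ¬ z.IsDiag } \ dblBndA A

/-- The cylinder set `C(γ_w) ⊆ ∂²F_n` of the geodesic path from `1` to `w`. -/
def cylinder {n : ℕ} (w : F n) : Set (Sym2 (Boundary n)) :=
  { z | ∃ ξ η : Boundary n, z = s(ξ, η) ∧ ξ.1 0 ≠ η.1 0 ∧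
      (wordPrefixOf w ξ ∨ wordPrefixOf w η) }

instance {n : ℕ} : MeasurableSpace (Sym2 (Boundary n)) := borel _

/-- The action of `g ∈ F n` on `∂²(F_n,𝒜)`. (The action of `F n` preserves
`∂²(F_n,𝒜)`, so the first branch always applies.) -/
def relAct {n r : ℕ} (A : Fin r → Subgroup (F n)) (g : F n) (z : ↥(relSet A)) :
    ↥(relSet A) :=
  if h : dbAct g z.1 ∈ relSet A then ⟨dbAct g z.1, h⟩ else z

/-- The cylinder `C(γ_w)` as a subset of `∂²(F_n,𝒜)`. -/
def relCyl {n r : ℕ} (A : Fin r → Subgroup (F n)) (w : F n) : Set ↥(relSet A) :=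
  Subtype.val ⁻¹' cylinder w

/-- The translated cylinder `g·C(γ_w)` as a subset of `∂²(F_n,𝒜)`. -/
def relCylG {n r : ℕ} (A : Fin r → Subgroup (F n)) (g w : F n) : Set ↥(relSet A) :=
  Subtype.val ⁻¹' (dbAct g '' cylinder w)

/-- A relative current on `(F_n,𝒜)`: an `F_n`-invariant Radon measure on the
locally compact space `∂²(F_n,𝒜)` (finite on compacts, outer regular, inner regular
on open sets). -/
def IsRelCurrent {n r : ℕ} (A : Fin r → Subgroup (F n)) (μ : Measure ↥(relSet A)) : Prop :=
  (∀ (g : F n) (s : Set ↥(relSet A)), MeasurableSet s → μ (relAct A g ⁻¹' s) = μ s) ∧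
  μ.Regular

/-- The `F_n`-orbit of a point of `Sym2 (∂F_n)`, inside `∂²(F_n,𝒜)`. -/
def orbitOf {n r : ℕ} (A : Fin r → Subgroup (F n)) (z : Sym2 (Boundary n)) :
    Set ↥(relSet A) :=
  { y | ∃ h : F n, (y : Sym2 (Boundary n)) = dbAct h z }

section FreeGroup

variable {α : Type*} [DecidableEq α]

/-- Only the first letter of a reduced word can be cancelled by a letter on the left. Suffixes come
before prefixes because `FreeGroup.reduce` recurses from the left. -/
lemma suffix_toWord_mk_singleton_mul {v : List (α × Bool)} {x : FreeGroup α} (b : α × Bool)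
    (hv : v <:+ x.toWord) (hlen : v.length < x.norm) :
    v <:+ (FreeGroup.mk [b] * x).toWord := by
  have hword : (FreeGroup.mk [b] * x).toWord = FreeGroup.reduce (b :: x.toWord) := by
    simp only [FreeGroup.toWord_mul, FreeGroup.toWord_mk, FreeGroup.reduce_singleton,
      List.singleton_append]
  rw [hword, FreeGroup.reduce.cons, FreeGroup.reduce_toWord]
  rw [FreeGroup.norm] at hlen
  cases hx : x.toWord with
  | nil => simp [hx] at hlen
  | cons c t =>
    rw [hx] at hv hlen
    have hvt : v <:+ t := (List.suffix_cons_iff.1 hv).resolve_left fun h => by simp [h] at hlen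
    dsimp only
    split_ifs
    · exact hvt
    · exact hv.trans (List.suffix_cons b _)

lemma suffix_toWord_mul {v : List (α × Bool)} {x s : FreeGroup α} (hv : v <:+ x.toWord)
    (hlen : v.length + s.norm ≤ x.norm) : v <:+ (s * x).toWord := by
  suffices ∀ L : List (α × Bool), v.length + L.length ≤ x.norm →
      v <:+ (FreeGroup.mk L * x).toWord by
    simpa only [FreeGroup.mk_toWord] using this s.toWord hlen
  intro L hL
  induction L with
  | nil => simpa only [← FreeGroup.one_eq_mk, one_mul] using hv
  | cons b L ih =>
    rw [List.length_cons] at hL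
    have hnorm : x.norm ≤ L.length + (FreeGroup.mk L * x).norm := by
      calc x.norm = ((FreeGroup.mk L)⁻¹ * (FreeGroup.mk L * x)).norm := by
            rw [inv_mul_cancel_left]
        _ ≤ (FreeGroup.mk L)⁻¹.norm + (FreeGroup.mk L * x).norm := FreeGroup.norm_mul_le _ _
        _ ≤ L.length + (FreeGroup.mk L * x).norm := by
            rw [FreeGroup.norm_inv_eq]
            gcongr
            exact FreeGroup.norm_mk_le
    have hmul : FreeGroup.mk (b :: L) * x = FreeGroup.mk [b] * (FreeGroup.mk L * x) := by
      rw [← mul_assoc, FreeGroup.mul_mk, List.singleton_append]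
    rw [hmul]
    exact suffix_toWord_mk_singleton_mul b (ih (by omega)) (by omega)

lemma prefix_toWord_iff_invRev_suffix {u : List (α × Bool)} {x : FreeGroup α} :
    u <+: x.toWord ↔ FreeGroup.invRev u <:+ x⁻¹.toWord := by
  rw [FreeGroup.toWord_inv, FreeGroup.invRev, FreeGroup.invRev, List.reverse_suffix]
  refine (List.prefix_map_iff_of_injective ?_).symm
  exact Function.Injective.prodMap Function.injective_id Bool.not_injective

/-- In the Cayley tree, the words with prefix `u` form the subtree below the vertex `u`, which lies
at distance `x.norm - u.length` from `x`. -/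
lemma prefix_toWord_mul {u : List (α × Bool)} {x s : FreeGroup α} (hu : u <+: x.toWord)
    (hlen : u.length + s.norm ≤ x.norm) : u <+: (x * s).toWord := by
  rw [prefix_toWord_iff_invRev_suffix] at hu ⊢
  rw [mul_inv_rev]
  exact suffix_toWord_mul hu (by simpa only [FreeGroup.invRev_length, FreeGroup.norm_inv_eq])

/-- A path in the coset `x * closure S` with jumps in `S` can leave the subtree of words with
prefix `u` only from a vertex near the root of that subtree. -/
lemma exists_mem_closure_norm_mul_le {S : Set (FreeGroup α)} {R : ℕ} (hS : ∀ s ∈ S, s.norm ≤ R)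
    {u : List (α × Bool)} {x y : FreeGroup α} (hxy : x⁻¹ * y ∈ Subgroup.closure S)
    (hx : u <+: x.toWord) (hy : ¬ u <+: y.toWord) :
    ∃ a ∈ Subgroup.closure S, (x * a).norm ≤ u.length + R := by
  by_contra! hfar
  have hstep : ∀ a ∈ Subgroup.closure S, u <+: (x * a).toWord → ∀ s : FreeGroup α, s.norm ≤ R →
      u <+: (x * (a * s)).toWord := by
    intro a ha hu s hs
    rw [← mul_assoc]
    exact prefix_toWord_mul hu (by linarith [hfar a ha])
  have hall : ∀ a ∈ Subgroup.closure S, u <+: (x * a).toWord := by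
    intro a ha
    induction ha using Subgroup.closure_induction_right with
    | one => rwa [mul_one]
    | mul_right a ha s hs ih => exact hstep a ha ih s (hS s hs)
    | mul_inv_cancel a ha s hs ih =>
      exact hstep a ha ih s⁻¹ (FreeGroup.norm_inv_eq.trans_le (hS s hs))
  exact hy (by simpa only [mul_inv_cancel_left] using hall _ hxy)

lemma finite_norm_le [Finite α] (N : ℕ) : {x : FreeGroup α | x.norm ≤ N}.Finite :=
  (List.finite_length_le (α × Bool) N).preimage FreeGroup.toWord_injective.injOn

end FreeGroup

section Sym2

variable (X : Type*) [TopologicalSpace X]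

lemma isOpenQuotientMap_sym2_mk : IsOpenQuotientMap (Sym2.mk (α := X)).uncurry where
  surjective := Sym2.mk_surjective
  continuous := continuous_quot_mk
  isOpenMap U hU := by
    have hsat : Quot.mk (Sym2.Rel X) ⁻¹' ((Sym2.mk (α := X)).uncurry '' U) =
        U ∪ Prod.swap ⁻¹' U := by
      ext ⟨x, y⟩
      simp only [Set.mem_preimage, Set.mem_image, Prod.exists, Function.uncurry_apply_pair,
        Sym2.eq_iff, Set.mem_union, Prod.swap_prod_mk]
      grind
    rw [← isQuotientMap_quot_mk.isOpen_preimage, hsat]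
    exact hU.union (hU.preimage continuous_swap)

end Sym2

section Boundary

variable {n : ℕ}

lemma continuous_letter (k : ℕ) : Continuous fun ξ : Boundary n => ξ.1 k :=
  (continuous_apply k).comp continuous_subtype_val

lemma isOpen_setOf_letter_ne (k : ℕ) :
    IsOpen {p : Boundary n × Boundary n | p.1.1 k ≠ p.2.1 k} :=
  isOpen_ne_fun ((continuous_letter k).comp continuous_fst)
    ((continuous_letter k).comp continuous_snd)

instance t2Space_boundary : T2Space (Boundary n) :=
  inferInstanceAs (T2Space { ξ : ℕ → Letter n // IsRed ξ })

lemma isClosed_setOf_isRed : IsClosed {ξ : ℕ → Letter n | IsRed ξ} := by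
  simp only [IsRed, Set.ofPred_forall]
  refine isClosed_iInter fun i => ?_
  have hpair : Continuous fun ξ : ℕ → Letter n => (ξ (i + 1), ξ i) :=
    (continuous_apply (i + 1)).prodMk (continuous_apply i)
  exact (isClosed_discrete {p : Letter n × Letter n | p.1 ≠ linv p.2}).preimage hpair

instance locallyCompactSpace_boundary : LocallyCompactSpace (Boundary n) :=
  isClosed_setOf_isRed.locallyCompactSpace

lemma length_bpre (ξ : Boundary n) (m : ℕ) : (bpre ξ m).length = m := by
  simp [bpre]

lemma bpre_prefix_bpre (ξ : Boundary n) {k m : ℕ} (h : k ≤ m) : bpre ξ k <+: bpre ξ m := by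
  obtain ⟨d, rfl⟩ := Nat.exists_eq_add_of_le h
  simp [bpre, List.range_add]

lemma bpre_succ (ξ : Boundary n) (m : ℕ) : bpre ξ (m + 1) = bpre ξ m ++ [ξ.1 m] := by
  simp [bpre, List.range_succ]

lemma not_bpre_prefix_of_letter_ne {ξ η : Boundary n} {k : ℕ} (hne : ξ.1 k ≠ η.1 k)
    {l : List (Letter n)} (hη : bpre η (k + 1) <+: l) : ¬ bpre ξ (k + 1) <+: l := by
  intro hξ
  have hlen : (bpre ξ (k + 1)).length = (bpre η (k + 1)).length := by
    rw [length_bpre, length_bpre]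
  have heq : bpre ξ (k + 1) = bpre η (k + 1) :=
    (List.prefix_of_prefix_length_le hξ hη hlen.le).eq_of_length hlen
  rw [bpre_succ, bpre_succ] at heq
  exact hne (List.singleton_injective (List.append_inj_right' heq rfl))

lemma isLocallyConstant_bpre (m : ℕ) : IsLocallyConstant fun ξ : Boundary n => bpre ξ m := by
  induction m with
  | zero => exact IsLocallyConstant.const []
  | succ m ih =>
    simp only [bpre_succ]
    exact ih.comp₂ ((IsLocallyConstant.iff_continuous _).2 (continuous_letter m))
      fun l c => l ++ [c]

lemma isClosed_limitSet (B : Subgroup (F n)) : IsClosed (limitSet B) := by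
  rw [limitSet, Set.ofPred_forall]
  exact isClosed_iInter fun m => ⟨isLocallyConstant_bpre m {l | ∃ a ∈ B, l <+: rword a}ᶜ⟩

end Boundary

section Conjugates

variable {n : ℕ} {A : Subgroup (F n)}

open scoped Pointwise in
lemma conjSub_mul_of_mem (g : F n) {a : F n} (ha : a ∈ A) : conjSub (g * a) A = conjSub g A := by
  change MulAut.conj (g * a) • A = MulAut.conj g • A
  rw [map_mul, mul_smul, Subgroup.conj_smul_eq_self_of_mem ha]

/-- Right multiplication by `g` moves the elements `g * a * g⁻¹` by a bounded distance, so the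
coset `g * A` accumulates at the same boundary points as `g * A * g⁻¹`. -/
lemma exists_prefix_rword_mul {g : F n} {ξ : Boundary n} (hξ : ξ ∈ limitSet (conjSub g A))
    (k : ℕ) : ∃ a ∈ A, bpre ξ k <+: rword (g * a) := by
  obtain ⟨_, ⟨a, ha, rfl⟩, hpre⟩ := hξ (k + wlen g)
  change bpre ξ (k + wlen g) <+: rword (g * a * g⁻¹) at hpre
  have hlen : (bpre ξ k).length + wlen g ≤ wlen (g * a * g⁻¹) := by
    rw [length_bpre]
    exact (length_bpre ξ _).symm.trans_le hpre.length_le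
  have hprefix : bpre ξ k <+: rword (g * a * g⁻¹ * g) :=
    prefix_toWord_mul ((bpre_prefix_bpre ξ (Nat.le_add_right k _)).trans hpre) hlen
  exact ⟨a, ha, by simpa only [inv_mul_cancel_right] using hprefix⟩

lemma finite_conjSub_separating (hA : A.FG) (k : ℕ) :
    {B | (∃ g, B = conjSub g A) ∧
      ∃ ξ ∈ limitSet B, ∃ η ∈ limitSet B, ξ.1 k ≠ η.1 k}.Finite := by
  obtain ⟨S, rfl⟩ := hA
  refine ((finite_norm_le (k + 1 + S.sup FreeGroup.norm)).image
    (conjSub · (Subgroup.closure (S : Set (F n))))).subset ?_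
  rintro _ ⟨⟨g, rfl⟩, ξ, hξ, η, hη, hne⟩
  obtain ⟨a, ha, hξa⟩ := exists_prefix_rword_mul hξ (k + 1)
  obtain ⟨b, hb, hηb⟩ := exists_prefix_rword_mul hη (k + 1)
  have hab : (g * a)⁻¹ * (g * b) ∈ Subgroup.closure (S : Set (F n)) := by
    simpa only [mul_inv_rev, mul_assoc, inv_mul_cancel_left] using mul_mem (inv_mem ha) hb
  obtain ⟨c, hc, hlen⟩ := exists_mem_closure_norm_mul_le
    (fun s hs => Finset.le_sup (f := FreeGroup.norm) hs) hab hξa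
    (not_bpre_prefix_of_letter_ne hne hηb)
  refine ⟨g * a * c, hlen.trans_eq (by rw [length_bpre]), ?_⟩
  change conjSub (g * a * c) _ = conjSub g _
  rw [conjSub_mul_of_mem _ hc, conjSub_mul_of_mem _ ha]

end Conjugates

section RelativeDoubleBoundary

variable {n r : ℕ} {A : Fin r → Subgroup (F n)}

/-- The ordered pairs of distinct points of `∂B`, which represent the contribution of `B` to `∂²𝒜`.
They are taken inside the complement of the diagonal, where these sets form a locally finite
family. -/
def limitPairs (B : Subgroup (F n)) : Set ↥(Set.diagonal (Boundary n))ᶜ :=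
  (↑) ⁻¹' (limitSet B ×ˢ limitSet B)

lemma isClosed_limitPairs (B : Subgroup (F n)) : IsClosed (limitPairs B) :=
  ((isClosed_limitSet B).prod (isClosed_limitSet B)).preimage continuous_subtype_val

lemma locallyFinite_limitPairs (hA : ∀ i, (A i).FG) :
    LocallyFinite fun B : {B // InSystem A B} => limitPairs B.1 := by
  rintro ⟨⟨ξ, η⟩, hne⟩
  obtain ⟨k, hk⟩ : ∃ k, ξ.1 k ≠ η.1 k := Function.ne_iff.1 fun h => hne (Subtype.ext h)
  have hfin : {B | InSystem A B ∧
      ∃ ξ ∈ limitSet B, ∃ η ∈ limitSet B, ξ.1 k ≠ η.1 k}.Finite := by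
    refine (Set.finite_iUnion fun i => finite_conjSub_separating (hA i) k).subset ?_
    rintro B ⟨⟨i, hB⟩, hsep⟩
    exact Set.mem_iUnion.2 ⟨i, hB, hsep⟩
  refine ⟨_, ((isOpen_setOf_letter_ne k).preimage continuous_subtype_val).mem_nhds hk, ?_⟩
  refine (hfin.preimage Subtype.val_injective.injOn).subset ?_
  rintro ⟨B, hB⟩ ⟨p, ⟨hp₁, hp₂⟩, hpk⟩
  exact ⟨hB, _, hp₁, _, hp₂, hpk⟩

lemma mk_mem_dblBndA_iff {ξ η : Boundary n} :
    s(ξ, η) ∈ dblBndA A ↔ ∃ B, InSystem A B ∧ ξ ∈ limitSet B ∧ η ∈ limitSet B := by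
  constructor
  · rintro ⟨i, g, ξ', η', h, hξ', hη'⟩
    rcases Sym2.eq_iff.1 h with ⟨rfl, rfl⟩ | ⟨rfl, rfl⟩
    · exact ⟨_, ⟨i, g, rfl⟩, hξ', hη'⟩
    · exact ⟨_, ⟨i, g, rfl⟩, hη', hξ'⟩
  · rintro ⟨_, ⟨i, g, rfl⟩, hξ, hη⟩
    exact ⟨i, g, ξ, η, rfl, hξ, hη⟩

lemma preimage_mk_relSet (A : Fin r → Subgroup (F n)) :
    (Sym2.mk (α := Boundary n)).uncurry ⁻¹' relSet A =
      (↑) '' (⋃ B : {B // InSystem A B}, limitPairs B.1)ᶜ := by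
  ext ⟨ξ, η⟩
  simp [relSet, limitPairs, mk_mem_dblBndA_iff, and_comm]

lemma isOpen_relSet (hA : ∀ i, (A i).FG) : IsOpen (relSet A) := by
  rw [← (isOpenQuotientMap_sym2_mk (Boundary n)).isQuotientMap.isOpen_preimage,
    preimage_mk_relSet]
  have hclosed : IsClosed (⋃ B : {B // InSystem A B}, limitPairs B.1) :=
    (locallyFinite_limitPairs hA).isClosed_iUnion fun B => isClosed_limitPairs B.1
  exact isClosed_diagonal.isOpen_compl.isOpenMap_subtype_val _ hclosed.isOpen_compl

end RelativeDoubleBoundary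

theorem statement_6_general {n r : ℕ} {A : Fin r → Subgroup (F n)} (hA : ∀ i, (A i).FG) :
    LocallyCompactSpace ↥(relSet A) := by
  have : LocallyCompactSpace (Sym2 (Boundary n)) :=
    (isOpenQuotientMap_sym2_mk (Boundary n)).locallyCompactSpace
  exact (isOpen_relSet hA).locallyCompactSpace

/-- The relative double boundary ∂²(F_n,𝒜) is locally compact. -/
theorem statement_6 (n r : ℕ) (hn : 2 ≤ n) (A : Fin r → Subgroup (F n))
    (hsys : IsSystem A) (hmal : SystemMalnormal A) :
    LocallyCompactSpace ↥(relSet A) :=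
  statement_6_general hsys.1

end RelCurr
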